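/- arXiv:0705.1286 — 13 statements merged into one kernel-verified Lean document; each statement's English description precedes it below -/
import Mathlib

section
/- Let R be an integral domain and let I and J be power stable ideals of R[X] such that the ideals I ∩ R and J ∩ R of R are comaximal (i.e. (I ∩ R) + (J ∩ R) = R). Then the ideal I ∩ J of R[X] is power stable. -/
open Polynomial

/-- An ideal `I` of `R[X]` is power stable if for all `t ≥ 1`,
`I^t ∩ R = (I ∩ R)^t`, intersections with `R` meaning contraction along `C : R →+* R[X]`. -/
def IsPowerStable {R : Type*} [CommRing R] (I : Ideal R[X]) : Prop :=
  ∀ t : ℕ, 1 ≤ t →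
    (I ^ t).comap (C : R →+* R[X]) = (I.comap (C : R →+* R[X])) ^ t

theorem stmt_1 {R : Type*} [CommRing R] [IsDomain R] (I J : Ideal R[X])
    (hI : IsPowerStable I) (hJ : IsPowerStable J)
    (hco : I.comap (C : R →+* R[X]) ⊔ J.comap (C : R →+* R[X]) = ⊤) :
    IsPowerStable (I ⊓ J) := by
  intro t ht
  have hIJ : IsCoprime I J := by
    rw [Ideal.isCoprime_iff_sup_eq, Ideal.eq_top_iff_one]
    have h1 : (1 : R) ∈ I.comap (C : R →+* R[X]) ⊔ J.comap (C : R →+* R[X]) := by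
      rw [hco]; trivial
    obtain ⟨a, ha, b, hb, hab⟩ := Submodule.mem_sup.1 h1
    refine Submodule.mem_sup.2 ⟨C a, ha, C b, hb, ?_⟩
    rw [← C_add, hab, C_1]
  have hc : IsCoprime (I.comap (C : R →+* R[X])) (J.comap (C : R →+* R[X])) :=
    Ideal.isCoprime_iff_sup_eq.2 hco
  rw [Ideal.comap_inf, Ideal.inf_eq_mul_of_isCoprime hIJ, Ideal.inf_eq_mul_of_isCoprime hc,
    mul_pow, mul_pow, ← Ideal.inf_eq_mul_of_isCoprime hIJ.pow,
    ← Ideal.inf_eq_mul_of_isCoprime hc.pow, Ideal.comap_inf, hI t ht, hJ t ht]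
end

section
/- Let R be an integral domain and I an ideal of R[X]. Then I is power stable if and only if for every prime ideal P of R, the localized ideal I_P (the image extension of I in R_P[X], where R_P is the localization of R at P) is power stable in R_P[X]. -/
open Polynomial

theorem comap_C_map_aux {R : Type*} [CommRing R] (P : Ideal R) [P.IsPrime] (J : Ideal R[X]) :
    (J.map (mapRingHom (algebraMap R (Localization.AtPrime P)))).comap
      (C : Localization.AtPrime P →+* (Localization.AtPrime P)[X]) =
    (J.comap (C : R →+* R[X])).map (algebraMap R (Localization.AtPrime P)) := by
  letI : Algebra R[X] (Localization.AtPrime P)[X] := Polynomial.algebra _ _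
  haveI := Polynomial.isLocalization P.primeCompl (Localization.AtPrime P)
  apply le_antisymm
  · intro x hx
    obtain ⟨⟨r, s⟩, hrs⟩ := IsLocalization.surj P.primeCompl x
    have h1 : algebraMap R[X] (Localization.AtPrime P)[X] (C r) ∈
        J.map (algebraMap R[X] (Localization.AtPrime P)[X]) := by
      have h2 : algebraMap R[X] (Localization.AtPrime P)[X] (C r) =
          C x * C (algebraMap R (Localization.AtPrime P) s) := by
        rw [← C_mul, hrs]
        exact map_C _
      rw [h2]
      exact Ideal.mul_mem_right _ _ hx
    rw [IsLocalization.algebraMap_mem_map_algebraMap_iff (P.primeCompl.map C)] at h1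
    obtain ⟨_, ⟨m, hm, rfl⟩, hmJ⟩ := h1
    rw [IsLocalization.mem_map_algebraMap_iff P.primeCompl]
    refine ⟨⟨⟨m * r, ?_⟩, ⟨m, hm⟩ * s⟩, ?_⟩
    · rw [Ideal.mem_comap, C_mul]
      exact hmJ
    · simp only [Submonoid.coe_mul, map_mul]
      rw [← hrs]
      ring
  · rw [Ideal.map_le_iff_le_comap]
    intro r hr
    simp only [Ideal.mem_comap] at hr ⊢
    have := Ideal.mem_map_of_mem (mapRingHom (algebraMap R (Localization.AtPrime P))) hr
    simpa using this

theorem stmt_2 {R : Type*} [CommRing R] [IsDomain R] (I : Ideal R[X]) :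
    IsPowerStable I ↔
      ∀ (P : Ideal R) (hP : P.IsPrime),
        haveI := hP
        IsPowerStable
          (I.map (mapRingHom (algebraMap R (Localization.AtPrime P)))) := by
  constructor
  · intro h P hP t ht
    rw [← Ideal.map_pow, comap_C_map_aux, comap_C_map_aux, h t ht, Ideal.map_pow]
  · intro h t ht
    refine Ideal.eq_of_localization_maximal fun P hP => ?_
    have := h P hP.isPrime t ht
    rwa [← Ideal.map_pow, comap_C_map_aux, comap_C_map_aux, ← Ideal.map_pow] at this
end

section
/- Let R be a principal ideal domain and I an ideal of R[X] with I ∩ R = Rd. If the image of I in (R/(d))[X] under the reduction map R[X] → (R/(d))[X] is generated by a single element that is a non-zero-divisor of (R/(d))[X], then I is power stable. -/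
open Polynomial

theorem aux_decomp {A : Type*} [CommRing A] (I : Ideal A) (f e : A) (hf : f ∈ I)
    (h1 : ∀ y ∈ I, ∃ h s, y = f * h + e * s) (n : ℕ) :
    ∀ y ∈ I ^ (n + 1), ∃ h, ∃ s ∈ I ^ n, y = f ^ (n + 1) * h + e * s := by
  induction n with
  | zero =>
    intro y hy
    obtain ⟨h, s, rfl⟩ := h1 y (by simpa using hy)
    exact ⟨h, s, by simp, by ring⟩
  | succ n ih =>
    intro y hy
    rw [pow_succ] at hy
    induction hy using Submodule.mul_induction_on' with
    | mem_mul_mem a ha b hb =>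
      obtain ⟨h, s, hs, hae⟩ := ih a ha
      obtain ⟨h', s', hbe⟩ := h1 b hb
      refine ⟨h * h', s * b + f ^ (n + 1) * (h * s'), ?_, ?_⟩
      · refine add_mem ?_ (Ideal.mul_mem_right _ _ (Ideal.pow_mem_pow hf _))
        rw [pow_succ]
        exact Ideal.mul_mem_mul hs hb
      · rw [hae]
        calc (f ^ (n + 1) * h + e * s) * b = f ^ (n + 1) * h * b + e * (s * b) := by ring
          _ = f ^ (n + 1) * h * (f * h' + e * s') + e * (s * b) := by rw [← hbe]
          _ = _ := by ring
    | add x _ y _ hx hy =>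
      obtain ⟨h, s, hs, rfl⟩ := hx
      obtain ⟨h', s', hs', rfl⟩ := hy
      exact ⟨h + h', s + s', add_mem hs hs', by ring⟩

theorem stmt_3 {R : Type*} [CommRing R] [IsDomain R] [IsPrincipalIdealRing R]
    (I : Ideal R[X]) (d : R) (hd : I.comap (C : R →+* R[X]) = Ideal.span {d})
    (g : (R ⧸ Ideal.span {d})[X])
    (hreg : g ∈ nonZeroDivisors (R ⧸ Ideal.span {d})[X])
    (hgen : I.map (mapRingHom (Ideal.Quotient.mk (Ideal.span {d}))) = Ideal.span {g}) :
    IsPowerStable I := by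
  set φ := mapRingHom (Ideal.Quotient.mk (Ideal.span {d})) with hφ
  have hsurj : Function.Surjective φ := map_surjective _ Ideal.Quotient.mk_surjective
  have hker : ∀ p : R[X], φ p = 0 → ∃ s, p = C d * s := by
    intro p hp
    have : C d ∣ p := by
      rw [C_dvd_iff_dvd_coeff]
      intro i
      have := congrArg (fun q => coeff q i) hp
      simpa [hφ, coeff_map, Ideal.Quotient.eq_zero_iff_mem, Ideal.mem_span_singleton] using this
    exact this
  have hdI : C d ∈ I := by
    have : d ∈ I.comap (C : R →+* R[X]) := by rw [hd]; exact Ideal.mem_span_singleton_self d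
    exact this
  obtain ⟨f, hf, hfg⟩ : ∃ f ∈ I, φ f = g := by
    have : g ∈ I.map φ := by rw [hgen]; exact Ideal.mem_span_singleton_self g
    exact (Ideal.mem_map_iff_of_surjective φ hsurj).1 this
  have h1 : ∀ y ∈ I, ∃ h s, y = f * h + C d * s := by
    intro y hy
    have h2 : φ y ∈ Ideal.span {g} := by rw [← hgen]; exact Ideal.mem_map_of_mem φ hy
    obtain ⟨k, hk⟩ := Ideal.mem_span_singleton.1 h2
    obtain ⟨h, rfl⟩ := hsurj k
    obtain ⟨s, hs⟩ := hker (y - f * h) (by rw [map_sub, map_mul, hfg, hk, sub_self])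
    exact ⟨h, s, by rw [← hs]; ring⟩
  have hdz : φ (C d) = 0 := by
    have : Ideal.Quotient.mk (Ideal.span {d}) d = 0 :=
      Ideal.Quotient.eq_zero_iff_mem.2 (Ideal.mem_span_singleton_self d)
    simp [hφ, this]
  have key : ∀ n : ℕ, ∀ c : R, C c ∈ I ^ n → d ^ n ∣ c := by
    intro n
    induction n with
    | zero => intro c _; simp
    | succ n ih =>
      intro c hc
      have hcI : c ∈ I.comap (C : R →+* R[X]) :=
        Ideal.mem_comap.2 (Ideal.pow_le_self (Nat.succ_ne_zero n) hc)
      rw [hd, Ideal.mem_span_singleton] at hcI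
      obtain ⟨c', rfl⟩ := hcI
      by_cases hd0 : d = 0
      · simp [hd0]
      obtain ⟨h, s, hs, he⟩ := aux_decomp I f (C d) hf h1 n _ hc
      have h3 : φ h * g ^ (n + 1) = 0 := by
        have := congrArg φ he
        rw [C_mul, map_mul, map_add, map_mul, map_mul, hdz, map_pow, hfg] at this
        rw [mul_comm]
        simpa using this.symm
      have h4 := (mem_nonZeroDivisors_iff_right.1 (pow_mem hreg (n + 1))) _ h3
      obtain ⟨h', rfl⟩ := hker h h4
      have h5 : C c' = f ^ (n + 1) * h' + s := by
        apply mul_left_cancel₀ (C_ne_zero.2 hd0)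
        rw [← C_mul, he]; ring
      rw [pow_succ']
      apply mul_dvd_mul_left
      apply ih
      rw [h5]
      exact add_mem (Ideal.mul_mem_right _ _
        (Ideal.pow_le_pow_right (Nat.le_succ n) (Ideal.pow_mem_pow hf _))) hs
  intro t _
  apply le_antisymm
  · intro c hc
    rw [hd, Ideal.span_singleton_pow, Ideal.mem_span_singleton]
    exact key t c hc
  · rw [hd, Ideal.span_singleton_pow, Ideal.span_singleton_le_iff_mem, Ideal.mem_comap, C_pow]
    exact Ideal.pow_mem_pow hdI t
end

section
/- Let R be a principal ideal domain. Then every prime ideal of R[X] is power stable. -/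
open Polynomial

lemma aux_pow {A : Type*} [CommRing A] (P : Ideal A) (p f : A) (hf : f ∈ P)
    (h : P = Ideal.span {p} ⊔ Ideal.span {f}) (t : ℕ) :
    P ^ (t + 1) ≤ Ideal.span {p} * P ^ t ⊔ Ideal.span {f ^ (t + 1)} := by
  induction t with
  | zero => simpa using h.le
  | succ t ih =>
    have hft : Ideal.span {f ^ (t + 1)} ≤ P ^ (t + 1) := by
      rw [Ideal.span_singleton_le_iff_mem]
      exact Ideal.pow_mem_pow hf _
    calc P ^ (t + 1 + 1) = P ^ (t + 1) * P := pow_succ _ _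
      _ ≤ (Ideal.span {p} * P ^ t ⊔ Ideal.span {f ^ (t + 1)}) * P := Ideal.mul_mono_left ih
      _ = Ideal.span {p} * P ^ (t + 1) ⊔ Ideal.span {f ^ (t + 1)} * P := by
          rw [Ideal.sup_mul, mul_assoc, ← pow_succ]
      _ ≤ _ := by
          refine sup_le le_sup_left ?_
          conv_lhs => rw [h]
          rw [Ideal.mul_sup]
          refine sup_le ?_ ?_
          · rw [mul_comm]
            exact le_trans (Ideal.mul_mono_right hft) le_sup_left
          · rw [Ideal.span_singleton_mul_span_singleton, ← pow_succ]
            exact le_sup_right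

lemma aux_div {R : Type*} [CommRing R] [IsDomain R] (P : Ideal R[X]) (p : R) (f : R[X])
    (hp : Prime p) (hpP : ∀ c : R, C c ∈ P → p ∣ c)
    (hf : f ∈ P) (h : P = Ideal.span {C p} ⊔ Ideal.span {f}) (t : ℕ) :
    ∀ c : R, C c ∈ P ^ t → p ^ t ∣ c := by
  have hCp : Prime (C p) := Polynomial.prime_C_iff.2 hp
  induction t with
  | zero => simp
  | succ t ih =>
    intro c hc
    obtain ⟨d, rfl⟩ := hpP c (Ideal.pow_le_self (Nat.succ_ne_zero t) hc)
    obtain ⟨y, hy, z, hz, hyz⟩ := Submodule.mem_sup.1 (aux_pow P _ f hf h t hc)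
    obtain ⟨a, ha, rfl⟩ := Ideal.mem_span_singleton_mul.1 hy
    obtain ⟨g, rfl⟩ := Ideal.mem_span_singleton.1 hz
    have key : ∃ b ∈ P ^ t, f ^ (t + 1) * g = C p * b := by
      have hd : C p ∣ f ^ (t + 1) * g :=
        ⟨C d - a, by rw [C_mul] at hyz; linear_combination hyz⟩
      rcases hCp.dvd_or_dvd hd with h1 | ⟨g', rfl⟩
      · obtain ⟨f', hf'⟩ := hCp.dvd_of_dvd_pow h1
        refine ⟨f ^ t * (f' * g), Ideal.mul_mem_right _ _ (Ideal.pow_mem_pow hf t), ?_⟩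
        rw [pow_succ]
        nth_rewrite 2 [hf']
        ring
      · exact ⟨f ^ (t + 1) * g', Ideal.mul_mem_right _ _
          (Ideal.pow_le_pow_right (Nat.le_succ t) (Ideal.pow_mem_pow hf (t + 1))), by ring⟩
    obtain ⟨b, hb, hb'⟩ := key
    have : C d = a + b := by
      apply mul_left_cancel₀ hCp.ne_zero
      rw [C_mul, hb'] at hyz
      linear_combination -hyz
    rw [pow_succ']
    exact mul_dvd_mul_left p (ih d (this ▸ add_mem ha hb))

lemma aux_gen {R : Type*} [CommRing R] [IsDomain R] [IsPrincipalIdealRing R]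
    (P : Ideal R[X]) (p : R) (hp : Prime p) (hpP : C p ∈ P) :
    ∃ f ∈ P, P = Ideal.span {C p} ⊔ Ideal.span {f} := by
  have hmax : (Ideal.span {p}).IsMaximal :=
    PrincipalIdealRing.isMaximal_of_irreducible hp.irreducible
  letI := Ideal.Quotient.field (Ideal.span {p})
  let φ : R[X] →+* (R ⧸ Ideal.span {p})[X] := mapRingHom (Ideal.Quotient.mk _)
  have hφ : Function.Surjective φ := Polynomial.map_surjective _ Ideal.Quotient.mk_surjective
  obtain ⟨q, hq⟩ := (IsPrincipalIdealRing.principal (P.map φ)).principal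
  have hqm : q ∈ P.map φ := by rw [hq]; exact Submodule.mem_span_singleton_self q
  obtain ⟨f, hf, rfl⟩ := (Ideal.mem_map_iff_of_surjective φ hφ).1 hqm
  refine ⟨f, hf, le_antisymm ?_ ?_⟩
  · intro x hx
    have hx' : φ x ∈ P.map φ := Ideal.mem_map_of_mem _ hx
    rw [hq] at hx'
    obtain ⟨k, hk⟩ := Ideal.mem_span_singleton.1 hx'
    obtain ⟨k, rfl⟩ := hφ k
    have hker : x - f * k ∈ RingHom.ker φ := by
      rw [RingHom.mem_ker, map_sub, map_mul, hk, sub_self]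
    rw [Polynomial.ker_mapRingHom, Ideal.mk_ker, Ideal.map_span, Set.image_singleton] at hker
    exact Submodule.mem_sup.2 ⟨_, hker, f * k,
      Ideal.mem_span_singleton.2 (dvd_mul_right _ _), by ring⟩
  · refine sup_le ?_ ?_ <;> rw [Ideal.span_singleton_le_iff_mem] <;> assumption

theorem stmt_4 {R : Type*} [CommRing R] [IsDomain R] [IsPrincipalIdealRing R]
    (P : Ideal R[X]) (hP : P.IsPrime) : IsPowerStable P := by
  intro t ht
  apply le_antisymm
  · obtain ⟨p, hp⟩ := (IsPrincipalIdealRing.principal (P.comap (C : R →+* R[X]))).principal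
    have hp : P.comap (C : R →+* R[X]) = Ideal.span {p} := hp
    have hprime : (P.comap (C : R →+* R[X])).IsPrime := Ideal.comap_isPrime _ _
    by_cases h0 : p = 0
    · have hb : P.comap (C : R →+* R[X]) = ⊥ := by rw [hp, h0]; simp
      rw [hb]
      exact (Ideal.comap_mono (Ideal.pow_le_self (by omega))).trans (hb.le.trans bot_le)
    · have hpp : Prime p := by
        rw [hp] at hprime
        exact (Ideal.span_singleton_prime h0).1 hprime
      have hm : ∀ c : R, C c ∈ P ↔ p ∣ c := fun c => by
        rw [← Ideal.mem_span_singleton, ← hp, Ideal.mem_comap]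
      obtain ⟨f, hf, h⟩ := aux_gen P p hpp ((hm p).2 dvd_rfl)
      intro c hc
      rw [hp, Ideal.span_singleton_pow, Ideal.mem_span_singleton]
      exact aux_div P p f hpp (fun c => (hm c).1) hf h t c hc
  · exact Ideal.le_comap_pow _ _
end

section
/- Let R be an integral domain, J an ideal of R, and f(X) ∈ R[X] a monic polynomial of degree at least 1. Then the ideal I of R[X] generated by J (viewed via the coefficient embedding) together with f(X) is power stable; in particular I^t ∩ R = J^t for all t ≥ 1. -/
open Polynomial

theorem comap_map_sup_aux {R : Type*} [CommRing R] (K : Ideal R) (f : R[X])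
    (hf : f.Monic) (hdeg : 1 ≤ f.natDegree) (r : R)
    (h : (C r : R[X]) ∈ K.map (C : R →+* R[X]) ⊔ Ideal.span {f}) : r ∈ K := by
  obtain ⟨a, ha, b, hb, hab⟩ := Submodule.mem_sup.mp h
  obtain ⟨g, rfl⟩ := Ideal.mem_span_singleton'.mp hb
  rw [← Ideal.Quotient.eq_zero_iff_mem]
  by_contra hr
  have ha' : a.map (Ideal.Quotient.mk K) = 0 := by
    ext n
    rw [coeff_map, coeff_zero]
    exact Ideal.Quotient.eq_zero_iff_mem.mpr (Ideal.mem_map_C_iff.mp ha n)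
  have key := congrArg (Polynomial.map (Ideal.Quotient.mk K)) hab
  rw [Polynomial.map_add, ha', zero_add, Polynomial.map_mul, map_C] at key
  have : Nontrivial (R ⧸ K) := ⟨⟨_, _, hr⟩⟩
  have hm := hf.map (Ideal.Quotient.mk K)
  have hd := hf.natDegree_map (Ideal.Quotient.mk K)
  have hg : g.map (Ideal.Quotient.mk K) ≠ 0 := by
    intro h0
    rw [h0, zero_mul] at key
    exact hr (C_eq_zero.mp key.symm)
  have h2 := congrArg natDegree key
  rw [mul_comm, hm.natDegree_mul' hg, natDegree_C, hd] at h2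
  omega

theorem pow_sup_le_aux {A : Type*} [CommRing A] (I B : Ideal A) (t : ℕ) :
    (I ⊔ B) ^ t ≤ I ^ t ⊔ B := by
  induction t with
  | zero => simp
  | succ n ih =>
    rw [pow_succ]
    have h1 : (I ⊔ B) ^ n * (I ⊔ B) ≤ (I ^ n ⊔ B) * (I ⊔ B) := Ideal.mul_mono ih le_rfl
    refine h1.trans ?_
    rw [Ideal.sup_mul, Ideal.mul_sup, ← pow_succ]
    have h2 : I ^ n * B ≤ B := Ideal.mul_le_right
    have h3 : B * (I ⊔ B) ≤ B := Ideal.mul_le_left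
    exact sup_le (sup_le le_sup_left (le_trans h2 le_sup_right)) (le_trans h3 le_sup_right)

theorem stmt_5 {R : Type*} [CommRing R] [IsDomain R] (J : Ideal R) (f : R[X])
    (hf : f.Monic) (hdeg : 1 ≤ f.natDegree) :
    IsPowerStable (J.map (C : R →+* R[X]) ⊔ Ideal.span {f}) ∧
      ∀ t : ℕ, 1 ≤ t →
        ((J.map (C : R →+* R[X]) ⊔ Ideal.span {f}) ^ t).comap (C : R →+* R[X]) = J ^ t := by
  have main : ∀ t : ℕ,
      ((J.map (C : R →+* R[X]) ⊔ Ideal.span {f}) ^ t).comap (C : R →+* R[X]) = J ^ t := by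
    intro t
    apply le_antisymm
    · intro r hr
      have h := pow_sup_le_aux _ _ t (Ideal.mem_comap.mp hr)
      rw [← Ideal.map_pow] at h
      exact comap_map_sup_aux _ f hf hdeg r h
    · rw [← Ideal.map_le_iff_le_comap, Ideal.map_pow]
      exact Ideal.pow_right_mono le_sup_left t
  refine ⟨fun t _ => ?_, fun t _ => main t⟩
  have h1 := main 1
  rw [pow_one, pow_one] at h1
  rw [main t, h1]
end

section
/- Let R be an integral domain and I an ideal of R[X] such that I ∩ R is a maximal ideal of R. Then I is power stable. -/
open Polynomial

theorem aux_pow0 {S : Type*} [CommRing S] (A F : Ideal S) (t : ℕ) :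
    (A ⊔ F) ^ t ≤ A ^ t ⊔ F := by
  induction t with
  | zero => simp
  | succ t ih =>
    have h : (A ⊔ F) ^ t * (A ⊔ F) ≤ (A ^ t ⊔ F) * (A ⊔ F) := mul_le_mul' ih le_rfl
    have h1 : A ^ t * F ≤ F := Ideal.mul_le.2 fun r _ s hs => F.mul_mem_left r hs
    have h2 : F * (A ⊔ F) ≤ F := Ideal.mul_le.2 fun r hr s _ => F.mul_mem_right s hr
    rw [pow_succ, pow_succ]
    refine h.trans ?_
    rw [Ideal.sup_mul, Ideal.mul_sup]
    exact sup_le (sup_le le_sup_left (le_sup_of_le_right h1)) (le_sup_of_le_right h2)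

theorem aux_pow_s7 {R : Type*} [CommRing R] (M : Ideal R) (f : R[X]) (t : ℕ) :
    (M.map (C : R →+* R[X]) ⊔ Ideal.span {f}) ^ t ≤
      (M ^ t).map (C : R →+* R[X]) ⊔ Ideal.span {f} := by
  rw [Ideal.map_pow]
  exact aux_pow0 _ _ t

theorem aux_mod {R : Type*} [CommRing R] (N : Ideal R) (f : R[X]) (p : R[X])
    (h : p ∈ N.map (C : R →+* R[X])) : p %ₘ f ∈ N.map (C : R →+* R[X]) := by
  rw [Ideal.mem_map_C_iff] at h
  rw [p.as_sum_support_C_mul_X_pow, ← modByMonicHom_apply, map_sum]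
  refine sum_mem fun i _ => ?_
  rw [modByMonicHom_apply, ← smul_eq_C_mul, smul_modByMonic, smul_eq_C_mul]
  exact Ideal.mul_mem_right _ _ (Ideal.mem_map_of_mem _ (h i))

theorem aux_main {R : Type*} [CommRing R] [Nontrivial R] (M : Ideal R) (f : R[X]) (hf : f.Monic)
    (hd : 0 < f.degree) (t : ℕ) (c : R)
    (hc : C c ∈ (M.map (C : R →+* R[X]) ⊔ Ideal.span {f}) ^ t) : c ∈ M ^ t := by
  obtain ⟨m, hm, y, hy, h⟩ := Submodule.mem_sup.1 (aux_pow_s7 M f t hc)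
  have h2 := aux_mod _ f m hm
  have h3 : m %ₘ f = C c := by
    have : C c %ₘ f = C c := (modByMonic_eq_self_iff hf).2 (degree_C_le.trans_lt hd)
    rw [← this, ← h, add_modByMonic,
      (modByMonic_eq_zero_iff_dvd hf).2 (Ideal.mem_span_singleton.1 hy), add_zero]
  rw [h3, Ideal.mem_map_C_iff] at h2
  simpa using h2 0

theorem aux_exists {R : Type*} [CommRing R] [Nontrivial R] (I : Ideal R[X])
    (hmax : (I.comap (C : R →+* R[X])).IsMaximal) : ∃ f : R[X], f.Monic ∧ 0 < f.degree ∧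
      I ≤ (I.comap (C : R →+* R[X])).map (C : R →+* R[X]) ⊔ Ideal.span {f} := by
  set M := I.comap (C : R →+* R[X]) with hM
  letI : Field (R ⧸ M) := Ideal.Quotient.field M
  have hMI : M.map (C : R →+* R[X]) ≤ I := Ideal.map_comap_le
  let φ : R[X] →+* (R ⧸ M)[X] := mapRingHom (Ideal.Quotient.mk M)
  have hφ : Function.Surjective φ := map_surjective _ Ideal.Quotient.mk_surjective
  have hker : ∀ p, φ p = 0 → p ∈ M.map (C : R →+* R[X]) := by
    intro p hp
    rw [Ideal.mem_map_C_iff]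
    intro n
    have := congrArg (fun q => coeff q n) hp
    simpa [φ, Ideal.Quotient.eq_zero_iff_mem] using this
  by_cases h0 : ∀ p ∈ I, φ p = 0
  · exact ⟨X, monic_X, by simp, fun p hp => Ideal.mem_sup_left (hker p (h0 p hp))⟩
  push Not at h0
  obtain ⟨p0, hp0, hp0'⟩ := h0
  obtain ⟨g, hg⟩ := (IsPrincipalIdealRing.principal (I.map φ)).principal
  have hgd : ∀ p ∈ I, g ∣ φ p := fun p hp => by
    have := Ideal.mem_map_of_mem φ hp
    rw [hg] at this
    exact Ideal.mem_span_singleton.1 this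
  have hg0 : g ≠ 0 := by
    rintro rfl
    exact hp0' (zero_dvd_iff.1 (hgd p0 hp0))
  have hgI : g ∈ I.map φ := by rw [hg]; exact Ideal.mem_span_singleton_self g
  have hnm : (g * C g.leadingCoeff⁻¹).Monic := monic_mul_leadingCoeff_inv hg0
  have hnI := Ideal.mul_mem_right (C g.leadingCoeff⁻¹) _ hgI
  have hnd : ∀ p ∈ I, g * C g.leadingCoeff⁻¹ ∣ φ p := fun p hp => by
    have hu : IsUnit (C g.leadingCoeff⁻¹) :=
      isUnit_C.2 (IsUnit.mk0 _ (inv_ne_zero (leadingCoeff_ne_zero.2 hg0)))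
    exact hu.mul_right_dvd.2 (hgd p hp)
  generalize g * C g.leadingCoeff⁻¹ = n at hnm hnI hnd
  obtain ⟨f, hf, hfd, hfm⟩ := lifts_and_degree_eq_and_monic
    (f := Ideal.Quotient.mk M) (p := n) (by
      rw [mem_lifts]; exact hφ n) hnm
  refine ⟨f, hfm, ?_, ?_⟩
  · rw [hfd, hnm.degree_pos]
    rintro rfl
    obtain ⟨p, hp, hp1⟩ := (Ideal.mem_map_iff_of_surjective φ hφ).1 hnI
    have h1 : p - 1 ∈ I := hMI (hker _ (by simp [hp1]))
    have h2 : (1 : R[X]) ∈ I := by simpa using sub_mem hp h1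
    exact hmax.ne_top ((Ideal.eq_top_iff_one _).2 (by simpa [hM] using h2))
  · intro p hp
    obtain ⟨q, hq⟩ := hnd p hp
    obtain ⟨q, rfl⟩ := hφ q
    have hf' : φ f = n := hf
    have := hker (p - f * q) (by rw [map_sub, map_mul, hf', hq, sub_self])
    exact Submodule.mem_sup.2 ⟨_, this, f * q,
      Ideal.mul_mem_right _ _ (Ideal.mem_span_singleton_self f), by ring⟩

theorem stmt_7 {R : Type*} [CommRing R] [IsDomain R] (I : Ideal R[X])
    (hmax : (I.comap (C : R →+* R[X])).IsMaximal) : IsPowerStable I := by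
  intro t _
  obtain ⟨f, hf, hd, hI⟩ := aux_exists I hmax
  apply le_antisymm
  · intro c hc
    exact aux_main _ f hf hd t c (Ideal.pow_right_mono hI t hc)
  · exact Ideal.le_comap_pow _ t
end

section
/- Let R be an integral domain and P a prime ideal of R[X] with p = P ∩ R. If for every t ≥ 1 the ideal p^t is p-primary (i.e. p^t is primary with radical equal to p), then P is power stable. -/
open Polynomial

lemma aux_ne_top {R : Type*} [CommRing R] (P : Ideal R[X]) (p : Ideal R) [p.IsPrime]
    (hp : p = P.comap (C : R →+* R[X])) :
    P.map (mapRingHom (algebraMap R (Localization.AtPrime p))) ≠ ⊤ := by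
  letI := (mapRingHom (algebraMap R (Localization.AtPrime p))).toAlgebra
  haveI := Polynomial.isLocalization p.primeCompl (Localization.AtPrime p)
  have := (IsLocalization.map_algebraMap_ne_top_iff_disjoint (p.primeCompl.map (C : R →+* R[X]))
    (Localization.AtPrime p)[X] P).2 (by
      rw [Set.disjoint_left]
      rintro _ ⟨s, hs, rfl⟩ h
      apply hs
      rw [hp]
      exact h)
  exact this

/-- Over a local ring, a proper ideal of `S[X]` containing `m` becomes contained in `m A` in a
suitable nonzero free extension `A = S[X]/(f)`. -/
lemma aux_local {S : Type*} [CommRing S] [IsLocalRing S] (J : Ideal S[X]) (hJ : J ≠ ⊤)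
    (hm : (IsLocalRing.maximalIdeal S).map (C : S →+* S[X]) ≤ J) (t : ℕ) (s : S)
    (hs : C s ∈ J ^ t) : s ∈ IsLocalRing.maximalIdeal S ^ t := by
  set m := IsLocalRing.maximalIdeal S with hmdef
  let k := IsLocalRing.ResidueField S
  let r : S →+* k := IsLocalRing.residue S
  have hr : Function.Surjective r := IsLocalRing.residue_surjective
  have hφ : Function.Surjective (mapRingHom r) := Polynomial.map_surjective r hr
  have hker : RingHom.ker (mapRingHom r) = m.map (C : S →+* S[X]) := by
    rw [Polynomial.ker_mapRingHom, IsLocalRing.ker_residue]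
  have hI : J.map (mapRingHom r) ≠ ⊤ := by
    intro h
    have h1 := Ideal.comap_map_of_surjective (mapRingHom r) hφ J
    rw [h, Ideal.comap_top, ← RingHom.ker_eq_comap_bot, hker, sup_eq_left.2 hm] at h1
    exact hJ h1.symm
  obtain ⟨N, hN, hle⟩ := Ideal.exists_le_maximal _ hI
  have hN0 : N ≠ ⊥ := Ring.ne_bot_of_isMaximal_of_not_isField hN (Polynomial.not_isField k)
  obtain ⟨g, hg, hgm⟩ : ∃ g : k[X], N = Ideal.span {g} ∧ g.Monic := by
    obtain ⟨g, hg⟩ := (IsPrincipalIdealRing.principal N).principal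
    have hg' : N = Ideal.span {g} := hg
    have hg0 : g ≠ 0 := by
      rintro rfl
      apply hN0
      simpa using hg'
    refine ⟨g * C g.leadingCoeff⁻¹, ?_, monic_mul_leadingCoeff_inv hg0⟩
    rw [hg', Ideal.span_singleton_mul_right_unit]
    exact isUnit_C.2 (IsUnit.mk0 _ (inv_ne_zero (leadingCoeff_ne_zero.2 hg0)))
  obtain ⟨f, hf, -, hfm⟩ := Polynomial.lifts_and_natDegree_eq_and_monic (f := r)
    (p := g) ((Polynomial.mem_lifts _).2 (hφ g)) hgm
  have hfree := hfm.free_adjoinRoot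
  have hnt : Nontrivial (AdjoinRoot f) := by
    refine Ideal.Quotient.nontrivial_iff.2 fun h => ?_
    have h2 := congrArg (Ideal.map (mapRingHom r)) h
    rw [Ideal.map_span, Ideal.map_top, Set.image_singleton, coe_mapRingHom, hf, ← hg] at h2
    exact hN.ne_top h2
  have hJm : J.map (AdjoinRoot.mk f) ≤ m.map (algebraMap S (AdjoinRoot f)) := by
    rw [Ideal.map_le_iff_le_comap]
    intro u hu
    have h1 : mapRingHom r u ∈ N := hle (Ideal.mem_map_of_mem _ hu)
    rw [hg, Ideal.mem_span_singleton] at h1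
    obtain ⟨h, hh⟩ := h1
    obtain ⟨h, rfl⟩ := hφ h
    have h2 : u - f * h ∈ RingHom.ker (mapRingHom r) := by
      rw [RingHom.mem_ker, map_sub, map_mul, hh, coe_mapRingHom, hf, sub_self]
    rw [hker] at h2
    have h3 := Ideal.mem_map_of_mem (AdjoinRoot.mk f) h2
    rw [Ideal.map_map] at h3
    rw [map_sub, map_mul, AdjoinRoot.mk_self, zero_mul, sub_zero] at h3
    exact h3
  have h1 := Ideal.mem_map_of_mem (AdjoinRoot.mk f) hs
  rw [Ideal.map_pow] at h1
  have h2 := Ideal.pow_right_mono hJm t h1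
  rw [← Ideal.map_pow] at h2
  rw [← Ideal.comap_map_eq_self_of_faithfullyFlat (B := AdjoinRoot f) (m ^ t)]
  exact h2

theorem stmt_9 {R : Type*} [CommRing R] [IsDomain R] (P : Ideal R[X])
    (hP : P.IsPrime) (p : Ideal R) (hp : p = P.comap (C : R →+* R[X]))
    (hprim : ∀ t : ℕ, 1 ≤ t → (p ^ t).IsPrimary ∧ (p ^ t).radical = p) :
    IsPowerStable P := by
  intro t ht
  have hpp : p.IsPrime := by rw [hp]; infer_instance
  rw [← hp]
  apply le_antisymm
  · intro x hx
    let S := Localization.AtPrime p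
    have hpm : p.map (algebraMap R S) = IsLocalRing.maximalIdeal S :=
      Localization.AtPrime.map_eq_maximalIdeal
    have h := aux_local (P.map (mapRingHom (algebraMap R S))) (aux_ne_top P p hp) (by
      rw [← hpm, Ideal.map_map, ← Polynomial.mapRingHom_comp_C, ← Ideal.map_map]
      apply Ideal.map_mono
      rw [Ideal.map_le_iff_le_comap, ← hp]) t (algebraMap R S x) (by
      have := Ideal.mem_map_of_mem (mapRingHom (algebraMap R S)) hx
      rw [Ideal.map_pow] at this
      simpa using this)
    rw [← hpm, ← Ideal.map_pow,
      IsLocalization.algebraMap_mem_map_algebraMap_iff p.primeCompl] at h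
    obtain ⟨m, hm, h⟩ := h
    obtain ⟨h1, h2⟩ := hprim t ht
    rw [mul_comm] at h
    rcases (Ideal.isPrimary_iff.1 h1).2 h with h | h
    · exact h
    · rw [h2] at h
      exact absurd h hm
  · rw [← Ideal.map_le_iff_le_comap, Ideal.map_pow]
    apply Ideal.pow_right_mono
    rw [Ideal.map_le_iff_le_comap, ← hp]
end

section
/- Let R be a Jacobson (Hilbert) integral domain. Then every maximal ideal of R[X] is power stable. -/
open Polynomial

lemma sup_pow_le_aux {S : Type*} [CommRing S] (A B : Ideal S) (t : ℕ) :
    (A ⊔ B) ^ t ≤ A ^ t ⊔ B := by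
  induction t with
  | zero => simp
  | succ n ih =>
    rw [pow_succ, pow_succ]
    refine (Ideal.mul_mono_left ih).trans ?_
    rw [Ideal.sup_mul, Ideal.mul_sup]
    have h1 : A ^ n * B ≤ B := Ideal.mul_le.2 fun r _ s hs => Ideal.mul_mem_left _ r hs
    have h2 : B * (A ⊔ B) ≤ B := Ideal.mul_le.2 fun r hr s _ => Ideal.mul_mem_right s _ hr
    exact sup_le (sup_le le_sup_left (le_sup_of_le_right h1)) (le_sup_of_le_right h2)

lemma exists_monic_aux {R : Type*} [CommRing R] (M : Ideal R[X]) (hM : M.IsMaximal)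
    (hm : (M.comap (C : R →+* R[X])).IsMaximal) :
    ∃ f : R[X], f.Monic ∧ f ∈ M ∧
      M ≤ (M.comap (C : R →+* R[X])).map (C : R →+* R[X]) ⊔ Ideal.span {f} := by
  classical
  set m := M.comap (C : R →+* R[X]) with hmdef
  letI : Field (R ⧸ m) := Ideal.Quotient.field m
  let φ : R[X] →+* (R ⧸ m)[X] := mapRingHom (Ideal.Quotient.mk m)
  have hφ : Function.Surjective φ := map_surjective _ Ideal.Quotient.mk_surjective
  have hker : RingHom.ker φ = m.map C := by
    rw [ker_mapRingHom, Ideal.mk_ker]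
  have hkerM : RingHom.ker φ ≤ M := by
    rw [hker]; exact Ideal.map_comap_le
  have hcm : (M.map φ).comap φ = M := by
    rw [Ideal.comap_map_of_surjective' φ hφ]
    exact sup_eq_left.2 hkerM
  have hNmax : (M.map φ).IsMaximal := by
    rcases Ideal.map_eq_top_or_isMaximal_of_surjective φ hφ hM with h | h
    · exfalso; rw [h, Ideal.comap_top] at hcm; exact hM.ne_top hcm.symm
    · exact h
  obtain ⟨g, hg⟩ := IsPrincipalIdealRing.principal (M.map φ)
  have hg : M.map φ = Ideal.span {g} := hg
  have hg0 : g ≠ 0 := by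
    rintro rfl
    rw [Ideal.span_singleton_eq_bot.2 rfl] at hg
    exact Ring.ne_bot_of_isMaximal_of_not_isField hNmax (Polynomial.not_isField _) hg
  have hg' : M.map φ = Ideal.span {normalize g} := by
    rw [hg]; exact Ideal.span_singleton_eq_span_singleton.2 (associated_normalize g)
  have hmon : (normalize g).Monic := monic_normalize hg0
  obtain ⟨f, hf, -, hfm⟩ := lifts_and_natDegree_eq_and_monic
    (f := Ideal.Quotient.mk m) (p := normalize g)
    (by rw [lifts_iff_coeff_lifts]; intro n; exact Ideal.Quotient.mk_surjective _) hmon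
  have hφf : φ f = normalize g := hf
  refine ⟨f, hfm, ?_, ?_⟩
  · rw [← hcm, Ideal.mem_comap, hφf, hg']; exact Ideal.mem_span_singleton_self _
  · intro p hp
    have : φ p ∈ M.map φ := Ideal.mem_map_of_mem _ hp
    rw [hg', Ideal.mem_span_singleton] at this
    obtain ⟨c, hc⟩ := this
    obtain ⟨q, rfl⟩ := hφ c
    have h1 : p - f * q ∈ m.map C := by
      rw [← hker, RingHom.mem_ker, map_sub, map_mul, hφf, hc, sub_self]
    have h2 : p = (p - f * q) + f * q := by ring
    rw [h2]
    exact Ideal.add_mem _ (Ideal.mem_sup_left h1) (Ideal.mem_sup_right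
      (Ideal.mul_mem_right _ _ (Ideal.mem_span_singleton_self _)))

theorem stmt_10 {R : Type*} [CommRing R] [IsDomain R] [IsJacobsonRing R]
    (M : Ideal R[X]) (hM : M.IsMaximal) : IsPowerStable M := by
  intro t _
  apply le_antisymm _ (Ideal.le_comap_pow _ t)
  have hm : (M.comap (C : R →+* R[X])).IsMaximal :=
    Polynomial.isMaximal_comap_C_of_isJacobsonRing M
  obtain ⟨f, hf, hfM, hle⟩ := exists_monic_aux M hM hm
  set m := M.comap (C : R →+* R[X]) with hmdef
  intro r hr
  have h1 := sup_pow_le_aux _ _ t (Ideal.pow_right_mono hle t hr)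
  obtain ⟨a, ha, b, hb, hab⟩ := Submodule.mem_sup.1 h1
  obtain ⟨q, rfl⟩ := Ideal.mem_span_singleton.1 hb
  rw [← Ideal.map_pow, ← Ideal.mk_ker (I := m ^ t), ← ker_mapRingHom, RingHom.mem_ker] at ha
  have h2 := congrArg (mapRingHom (Ideal.Quotient.mk (m ^ t))) hab
  rw [map_add, ha, zero_add, map_mul] at h2
  simp only [coe_mapRingHom, map_C] at h2
  rw [← Ideal.Quotient.eq_zero_iff_mem]
  by_contra hne
  haveI : Nontrivial (R ⧸ m ^ t) := ⟨_, _, hne⟩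
  have hfd : 0 < f.natDegree := by
    rw [Nat.pos_iff_ne_zero]
    intro h0
    rw [Monic.natDegree_eq_zero hf] at h0
    exact hM.ne_top ((Ideal.eq_top_iff_one _).2 (h0 ▸ hfM))
  have hfm : (f.map (Ideal.Quotient.mk (m ^ t))).Monic := hf.map _
  refine hfm.not_dvd_of_natDegree_lt (C_ne_zero.2 hne) ?_ ⟨_, h2.symm⟩
  rw [natDegree_C, hf.natDegree_map]
  exact hfd
end

section
/- Let R be a Jacobson (Hilbert) integral domain and let I be a radical ideal of R[X] which is a finite intersection of maximal ideals of R[X]. Then I is power stable. -/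
open Polynomial

/-- An auxiliary bound for powers of sums of ideals. -/
theorem aux_sup_pow_le {A : Type*} [CommRing A] (I J : Ideal A) (t : ℕ) :
    (I ⊔ J) ^ t ≤ I ^ t ⊔ J := by
  induction t with
  | zero => simp
  | succ n ih =>
    have h1 : I ^ n * J ≤ J := Ideal.mul_le_right
    have h2 : J * (I ⊔ J) ≤ J := Ideal.mul_le_left
    calc (I ⊔ J) ^ (n + 1) = (I ⊔ J) ^ n * (I ⊔ J) := pow_succ _ _
      _ ≤ (I ^ n ⊔ J) * (I ⊔ J) := Ideal.mul_mono_left ih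
      _ = I ^ n * (I ⊔ J) ⊔ J * (I ⊔ J) := Ideal.sup_mul _ _ _
      _ = (I ^ n * I ⊔ I ^ n * J) ⊔ J * (I ⊔ J) := by rw [Ideal.mul_sup (I ^ n) I J]
      _ ≤ (I ^ n * I ⊔ J) ⊔ J := sup_le_sup (sup_le_sup le_rfl h1) h2
      _ = I ^ (n + 1) ⊔ J := by rw [sup_assoc, sup_idem, ← pow_succ I n]

/-- Powers commute with finite intersections of maximal ideals. -/
theorem aux_inf_pow {A : Type*} [CommRing A] (s : Finset (Ideal A))
    (hs : ∀ M ∈ s, M.IsMaximal) (t : ℕ) : (s.inf id) ^ t = s.inf (fun M => M ^ t) := by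
  have h : (s : Set (Ideal A)).Pairwise fun M N => IsCoprime M N := fun M hM N hN hne => by
    have := hs M hM
    have := hs N hN
    exact Ideal.isCoprime_of_isMaximal hne
  have h1 := Ideal.prod_eq_iInf_of_pairwise_isCoprime (s := s) (J := id) h
  have h2 := Ideal.prod_eq_iInf_of_pairwise_isCoprime (s := s) (J := fun M => M ^ t)
    (fun M hM N hN hne => (h hM hN hne).pow)
  rw [Finset.inf_eq_iInf, Finset.inf_eq_iInf, ← h1, ← h2, Finset.prod_pow]
  rfl

theorem aux_contract {R : Type*} [CommRing R] (J : Ideal R) (f : R[X]) (hf : f.Monic)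
    (hd : 0 < f.natDegree) (a : R) (ha : C a ∈ J.map C ⊔ Ideal.span {f}) : a ∈ J := by
  by_contra hJ
  have hne : Ideal.Quotient.mk J a ≠ 0 := by rwa [Ne, Ideal.Quotient.eq_zero_iff_mem]
  have : Nontrivial (R ⧸ J) := ⟨_, _, hne⟩
  have hm := hf.map (Ideal.Quotient.mk J)
  refine hm.not_dvd_of_degree_lt (q := C (Ideal.Quotient.mk J a)) (by simpa using hne) ?_ ?_
  · rw [degree_C hne, hf.degree_map]
    exact natDegree_pos_iff_degree_pos.mp hd
  · obtain ⟨g, hg, h, hh, e⟩ := Submodule.mem_sup.mp ha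
    obtain ⟨k, rfl⟩ := Ideal.mem_span_singleton.mp hh
    have hg0 : g.map (Ideal.Quotient.mk J) = 0 := by
      ext n
      rw [coeff_map, coeff_zero, Ideal.Quotient.eq_zero_iff_mem]
      exact Ideal.mem_map_C_iff.mp hg n
    have e' := congrArg (Polynomial.map (Ideal.Quotient.mk J)) e
    rw [Polynomial.map_add, hg0, zero_add, Polynomial.map_mul, map_C] at e'
    exact ⟨_, e'.symm⟩

theorem aux_max {R : Type*} [CommRing R] [Nontrivial R] [IsJacobsonRing R]
    (M : Ideal R[X]) (hM : M.IsMaximal) (t : ℕ) :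
    (M ^ t).comap (C : R →+* R[X]) = (M.comap (C : R →+* R[X])) ^ t := by
  apply le_antisymm _ (Ideal.le_comap_pow C t)
  have hm : (M.comap (C : R →+* R[X])).IsMaximal := isMaximal_comap_C_of_isJacobsonRing M
  obtain ⟨f, hf, hd, hle⟩ : ∃ f : R[X], f.Monic ∧ 0 < f.natDegree ∧
      M ≤ (M.comap C).map C ⊔ Ideal.span {f} := by
    by_cases hne : M = (M.comap C).map C
    · exact ⟨X, monic_X, by simp, hne.le.trans le_sup_left⟩
    · obtain ⟨f, hf, e⟩ := exists_monic_span_sup_map_eq R M hm hne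
      refine ⟨f, hf, ?_, e.le⟩
      rw [Nat.pos_iff_ne_zero]
      intro h0
      have h1 : f = 1 := hf.natDegree_eq_zero.mp h0
      apply hM.ne_top
      rw [e, h1]
      simp
  intro a ha
  refine aux_contract _ f hf hd a ?_
  rw [Ideal.map_pow]
  exact aux_sup_pow_le _ _ t (Ideal.pow_right_mono hle t ha)

theorem stmt_12 {R : Type*} [CommRing R] [IsDomain R] [IsJacobsonRing R]
    (I : Ideal R[X]) (hrad : I.IsRadical)
    (s : Finset (Ideal R[X])) (hs : ∀ M ∈ s, M.IsMaximal)
    (hI : I = s.inf id) : IsPowerStable I := by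
  classical
  intro t _
  subst hI
  have h := aux_inf_pow (s.image (Ideal.comap (C : R →+* R[X]))) (by
    intro m hm
    obtain ⟨M, hM, rfl⟩ := Finset.mem_image.mp hm
    have := hs M hM
    exact isMaximal_comap_C_of_isJacobsonRing M) t
  rw [Finset.inf_image, Finset.inf_image] at h
  rw [aux_inf_pow s hs t, Ideal.comap_finsetInf, Ideal.comap_finsetInf]
  refine Eq.trans ?_ h.symm
  exact Finset.inf_congr rfl fun M hM => aux_max M (hs M hM) t
end

section
/- Let R be a Noetherian integral domain of Krull dimension 1. Then every radical ideal of R[X] is power stable. -/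
open Polynomial

lemma exists_gen_aux {R : Type*} [CommRing R] (M : Ideal R[X]) (hM : M ≠ ⊤)
    (m : Ideal R) [m.IsMaximal] (hm : M.comap (C : R →+* R[X]) = m) :
    ∃ f : R[X], (f = 0 ∨ (f.Monic ∧ 0 < f.natDegree)) ∧ M ≤ m.map C ⊔ Ideal.span {f} := by
  classical
  let _ : Field (R ⧸ m) := Ideal.Quotient.field m
  let φ : R[X] →+* (R ⧸ m)[X] := mapRingHom (Ideal.Quotient.mk m)
  have hφ : Function.Surjective φ := Polynomial.map_surjective _ Ideal.Quotient.mk_surjective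
  have hker : RingHom.ker φ = m.map C := by
    rw [Polynomial.ker_mapRingHom, Ideal.mk_ker]
  have hkM : RingHom.ker φ ≤ M := by
    rw [hker, Ideal.map_le_iff_le_comap, hm]
  have hcm : (M.map φ).comap φ = M := by
    rw [Ideal.comap_map_of_surjective' φ hφ, sup_eq_left.2 hkM]
  obtain ⟨g, hg⟩ := (IsPrincipalIdealRing.principal (M.map φ)).principal
  have hg' : M.map φ = Ideal.span {g} := hg
  by_cases h0 : g = 0
  · refine ⟨0, Or.inl rfl, ?_⟩
    rw [← hker]
    refine le_trans ?_ le_sup_left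
    intro x hx
    have := Ideal.mem_map_of_mem φ hx
    rw [hg', h0] at this
    simpa [RingHom.mem_ker] using this
  · have hmon := monic_mul_leadingCoeff_inv h0
    obtain ⟨f, hf, -, hfm⟩ := lifts_and_natDegree_eq_and_monic
      (mem_lifts_of_surjective (f := Ideal.Quotient.mk m) Ideal.Quotient.mk_surjective _) hmon
    have hff : φ f = g * C g.leadingCoeff⁻¹ := hf
    have hspan : Ideal.span {g} = Ideal.span {φ f} := by
      rw [hff]
      refine (Ideal.span_singleton_mul_right_unit ?_ g).symm
      rw [Polynomial.isUnit_C]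
      exact (inv_ne_zero (leadingCoeff_ne_zero.2 h0)).isUnit
    have hfM : f ∈ M := by
      rw [← hcm, Ideal.mem_comap, hg', hspan]
      exact Ideal.mem_span_singleton_self _
    refine ⟨f, Or.inr ⟨hfm, ?_⟩, ?_⟩
    · rw [Nat.pos_iff_ne_zero]
      intro hd
      rw [hfm.natDegree_eq_zero] at hd
      exact hM ((Ideal.eq_top_iff_one _).2 (hd ▸ hfM))
    · rw [sup_comm, ← hker, ← Ideal.comap_map_of_surjective' φ hφ, ← Ideal.map_le_iff_le_comap,
        Ideal.map_span, Set.image_singleton, ← hspan, hg']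

lemma mem_pow_aux {R : Type*} [CommRing R] (M : Ideal R[X]) (hM : M ≠ ⊤)
    (m : Ideal R) [m.IsMaximal] (hm : M.comap (C : R →+* R[X]) = m) (t : ℕ) (c : R)
    (hc : C c ∈ M ^ t) : c ∈ m ^ t := by
  obtain ⟨f, hf, hle⟩ := exists_gen_aux M hM m hm
  have h1 : C c ∈ (m ^ t).map C ⊔ Ideal.span {f} := by
    rw [Ideal.map_pow]
    exact sup_pow_le_aux _ _ t (Ideal.pow_right_mono hle t hc)
  obtain ⟨p, hp, q, hq, hpq⟩ := Submodule.mem_sup.1 h1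
  obtain ⟨h, rfl⟩ := Ideal.mem_span_singleton'.1 hq
  by_cases htop : m ^ t = ⊤
  · rw [htop]; trivial
  have : Nontrivial (R ⧸ m ^ t) := Ideal.Quotient.nontrivial_iff.2 htop
  have hp0 : p.map (Ideal.Quotient.mk (m ^ t)) = 0 := by
    ext n
    rw [coeff_map, coeff_zero]
    exact Ideal.Quotient.eq_zero_iff_mem.2 (Ideal.mem_map_C_iff.1 hp n)
  have key := congrArg (Polynomial.map (Ideal.Quotient.mk (m ^ t))) hpq
  rw [Polynomial.map_add, hp0, zero_add, Polynomial.map_mul, map_C] at key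
  rw [← Ideal.Quotient.eq_zero_iff_mem, ← C_eq_zero, ← key]
  rcases hf with rfl | ⟨hfm, hd⟩
  · simp
  · by_contra hne
    have hh : h.map (Ideal.Quotient.mk (m ^ t)) ≠ 0 := by
      intro h0; apply hne; rw [h0, zero_mul]
    have := congrArg natDegree key
    rw [mul_comm, (hfm.map _).natDegree_mul' hh, natDegree_C, hfm.natDegree_map] at this
    omega

theorem stmt_13 {R : Type*} [CommRing R] [IsDomain R] [IsNoetherianRing R]
    (hdim : ringKrullDim R = 1) (I : Ideal R[X]) (hrad : I.IsRadical) :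
    IsPowerStable I := by
  intro t ht
  refine le_antisymm ?_ (Ideal.le_comap_pow _ t)
  have hJrad : (I.comap (C : R →+* R[X])).IsRadical := hrad.comap _
  by_cases hJ : I.comap (C : R →+* R[X]) = ⊥
  · refine (Ideal.comap_mono (Ideal.pow_le_self (by omega))).trans ?_
    rw [hJ]; exact bot_le
  have hmax : ∀ p ∈ (I.comap (C : R →+* R[X])).minimalPrimes, p.IsMaximal := by
    intro p hp
    have : Ring.KrullDimLE 1 R := Ring.krullDimLE_iff.2 (by rw [hdim]; rfl)
    have hpp : p.IsPrime := hp.1.1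
    refine Ring.krullDimLE_one_iff_of_isPrime_bot.1 this p ?_ hpp
    rintro rfl
    exact hJ (le_bot_iff.1 hp.1.2)
  have hfin := (I.comap (C : R →+* R[X])).finite_minimalPrimes_of_isNoetherianRing
  have hcop : ∀ p ∈ hfin.toFinset, ∀ q ∈ hfin.toFinset, p ≠ q → IsCoprime p q := by
    intro p hp q hq hpq
    have := hmax p (hfin.mem_toFinset.1 hp)
    have := hmax q (hfin.mem_toFinset.1 hq)
    exact Ideal.isCoprime_of_isMaximal hpq
  have hprod : ∏ p ∈ hfin.toFinset, p = I.comap (C : R →+* R[X]) := by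
    have h1 := Ideal.prod_eq_iInf_of_pairwise_isCoprime (s := hfin.toFinset) (J := fun p => p)
      (fun p hp q hq hpq => hcop p hp q hq hpq)
    rw [h1]
    conv_rhs => rw [← hJrad.radical, ← Ideal.sInf_minimalPrimes, sInf_eq_iInf]
    simp
  have hprodt : (I.comap (C : R →+* R[X])) ^ t = ⨅ p ∈ hfin.toFinset, p ^ t := by
    refine (congrArg (· ^ t) hprod.symm).trans ?_
    refine (Finset.prod_pow _ _ _).symm.trans ?_
    exact Ideal.prod_eq_iInf_of_pairwise_isCoprime (s := hfin.toFinset) (J := fun p => p ^ t)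
      (fun p hp q hq hpq => (hcop p hp q hq hpq).pow)
  rw [hprodt]
  refine le_iInf₂ fun p hp c hc => ?_
  have hp' := hfin.mem_toFinset.1 hp
  have := hmax p hp'
  obtain ⟨M, hMp, hIM, hMc⟩ := Ideal.exists_comap_eq_of_mem_minimalPrimes _ p hp'
  exact mem_pow_aux M hMp.ne_top p hMc t c (Ideal.pow_right_mono hIM t hc)
end

section
/- Let R be a Noetherian integral domain. If every ideal of R[X] is power stable, then R is a field. -/
open Polynomial

theorem stmt_14 {R : Type*} [CommRing R] [IsDomain R] [IsNoetherianRing R]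
    (h : ∀ I : Ideal R[X], IsPowerStable I) : IsField R := by
  refine ⟨⟨0, 1, zero_ne_one⟩, mul_comm, ?_⟩
  intro a ha
  set p : R[X] := X ^ 2 - C a with hp
  set I : Ideal R[X] := Ideal.span {p, C a * X, C a ^ 2} with hI
  have h1 : p ∈ I := Ideal.subset_span (by simp)
  have h2 : C a * X ∈ I := Ideal.subset_span (by simp)
  have h3 : C a ^ 2 ∈ I := Ideal.subset_span (by simp)
  have key : I.comap (C : R →+* R[X]) ≤ Ideal.span {a ^ 2} := by
    intro c hc
    rw [Ideal.mem_comap, hI] at hc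
    obtain ⟨u, v, w, huvw⟩ := Submodule.mem_span_triple.mp hc
    let M : Matrix (Fin 2) (Fin 2) R := !![0, a; 1, 0]
    have hM : aeval M p = 0 := by
      simp only [hp, map_sub, map_pow, aeval_X, aeval_C, Matrix.algebraMap_eq_diagonal]
      ext i j
      fin_cases i <;> fin_cases j <;> simp [M, pow_two, Matrix.mul_apply, Fin.sum_univ_two]
    have e := congrArg (fun q => (aeval M q) 0 0) huvw
    have hcomm : v • (C a * X : R[X]) = C a * (X * v) := by rw [smul_eq_mul]; ring
    have hcomm2 : w • (C a ^ 2 : R[X]) = C (a ^ 2) * w := by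
      rw [smul_eq_mul, C_pow]; ring
    rw [hcomm, hcomm2] at e
    simp only [smul_eq_mul, map_add, map_mul, hM, aeval_X, aeval_C, mul_zero, zero_add,
      ← Algebra.smul_def, Matrix.add_apply, Matrix.smul_apply, Matrix.mul_apply,
      Fin.sum_univ_two, Matrix.algebraMap_matrix_apply] at e
    simp [M] at e
    rw [Ideal.mem_span_singleton]
    exact ⟨(aeval M v) 1 0 + (aeval M w) 0 0, by rw [← e]; ring⟩
  have hm : a ^ 3 ∈ (I ^ 2).comap (C : R →+* R[X]) := by
    rw [Ideal.mem_comap, pow_two]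
    have e : C (a ^ 3) = (C a * X) * (C a * X) - (X * (p * (C a * X)) - C a * (p * p)) := by
      rw [hp, C_pow]; ring
    rw [e]
    exact sub_mem (Ideal.mul_mem_mul h2 h2) (sub_mem (Ideal.mul_mem_left _ _
      (Ideal.mul_mem_mul h1 h2)) (Ideal.mul_mem_left _ _ (Ideal.mul_mem_mul h1 h1)))
  rw [h I 2 (by norm_num)] at hm
  have hm2 := Ideal.pow_right_mono key 2 hm
  rw [Ideal.span_singleton_pow, Ideal.mem_span_singleton] at hm2
  obtain ⟨b, hb⟩ := hm2
  refine ⟨b, mul_left_cancel₀ (pow_ne_zero 3 ha) ?_⟩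
  rw [mul_one]
  nth_rewrite 2 [hb]
  ring
end

section
/- Let R be an integral domain. Every principal ideal of R[X] is power stable. -/
open Polynomial

theorem comap_C_span_C_aux {R : Type*} [CommRing R] (a : R) :
    (Ideal.span {(C a : R[X])}).comap (C : R →+* R[X]) = Ideal.span {a} := by
  ext r
  rw [Ideal.mem_comap, Ideal.mem_span_singleton, Ideal.mem_span_singleton]
  constructor
  · rintro ⟨q, hq⟩
    refine ⟨q.coeff 0, ?_⟩
    have h := congrArg (fun p => Polynomial.coeff p 0) hq
    simpa using h
  · rintro ⟨q, rfl⟩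
    exact ⟨C q, by simp⟩

theorem comap_C_span_pos_aux {R : Type*} [CommRing R] [IsDomain R] (f : R[X])
    (hf : f.natDegree ≠ 0) :
    (Ideal.span {f}).comap (C : R →+* R[X]) = ⊥ := by
  rw [eq_bot_iff]
  intro r hr
  rw [Ideal.mem_comap, Ideal.mem_span_singleton] at hr
  rw [Ideal.mem_bot]
  by_contra h
  have h1 := Polynomial.natDegree_le_of_dvd hr (by simpa using h)
  rw [natDegree_C] at h1
  omega

theorem stmt_15 {R : Type*} [CommRing R] [IsDomain R] (f : R[X]) :
    IsPowerStable (Ideal.span {f}) := by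
  intro t ht
  rw [Ideal.span_singleton_pow]
  by_cases hf : f.natDegree = 0
  · rw [Polynomial.eq_C_of_natDegree_eq_zero hf, ← C_pow, comap_C_span_C_aux,
      comap_C_span_C_aux, Ideal.span_singleton_pow]
  · rw [comap_C_span_pos_aux f hf, comap_C_span_pos_aux (f ^ t), ← Ideal.zero_eq_bot,
      zero_pow (by omega)]
    rw [natDegree_pow]
    exact Nat.mul_ne_zero (by omega) hf
end

section
/- Let R be a principal ideal domain and p a prime element of R. Let I be the ideal of R[X] generated by X² − p and X³. Then I ∩ R = R·p², p³ ∈ I², and consequently I is not power stable (indeed I² ∩ R ≠ (I ∩ R)²). -/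
open Polynomial

theorem stmt_18 {R : Type*} [CommRing R] [IsDomain R] [IsPrincipalIdealRing R]
    (p : R) (hp : Prime p) :
    (Ideal.span {X ^ 2 - Polynomial.C p, X ^ 3} : Ideal R[X]).comap (C : R →+* R[X]) =
        Ideal.span {p ^ 2} ∧
      p ^ 3 ∈ ((Ideal.span {X ^ 2 - Polynomial.C p, X ^ 3} : Ideal R[X]) ^ 2).comap
        (C : R →+* R[X]) ∧
      ¬ IsPowerStable (Ideal.span {X ^ 2 - Polynomial.C p, X ^ 3} : Ideal R[X]) ∧
      ((Ideal.span {X ^ 2 - Polynomial.C p, X ^ 3} : Ideal R[X]) ^ 2).comap (C : R →+* R[X]) ≠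
        ((Ideal.span {X ^ 2 - Polynomial.C p, X ^ 3} : Ideal R[X]).comap (C : R →+* R[X])) ^ 2 := by
  have hf : (X ^ 2 - C p : R[X]) ∈ (Ideal.span {X ^ 2 - C p, X ^ 3} : Ideal R[X]) :=
    Ideal.subset_span (by simp)
  have hg : (X ^ 3 : R[X]) ∈ (Ideal.span {X ^ 2 - C p, X ^ 3} : Ideal R[X]) :=
    Ideal.subset_span (by simp)
  have h1 : (Ideal.span {X ^ 2 - C p, X ^ 3} : Ideal R[X]).comap (C : R →+* R[X]) =
      Ideal.span {p ^ 2} := by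
    apply le_antisymm
    · intro c hc
      rw [Ideal.mem_comap, Ideal.mem_span_pair] at hc
      obtain ⟨a, b, h⟩ := hc
      have h0 := congrArg (fun q => coeff q 0) h
      have h2 := congrArg (fun q => coeff q 2) h
      simp [mul_sub, coeff_mul_X_pow', coeff_C] at h0 h2
      rw [Ideal.mem_span_singleton]
      exact ⟨-a.coeff 2, by linear_combination -h0 - p * h2⟩
    · rw [Ideal.span_singleton_le_iff_mem, Ideal.mem_comap, Ideal.mem_span_pair]
      exact ⟨-(X ^ 2 + C p), X, by rw [C_pow]; ring⟩
  have h2 : p ^ 3 ∈ ((Ideal.span {X ^ 2 - C p, X ^ 3} : Ideal R[X]) ^ 2).comap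
      (C : R →+* R[X]) := by
    rw [Ideal.mem_comap, pow_two]
    have e : (C (p ^ 3) : R[X]) = X ^ 3 * X ^ 3 + (-3 * X) * ((X ^ 2 - C p) * X ^ 3)
        + (3 * X ^ 2 - (X ^ 2 - C p)) * ((X ^ 2 - C p) * (X ^ 2 - C p)) := by
      rw [C_pow]; ring
    rw [e]
    exact add_mem (add_mem (Ideal.mul_mem_mul hg hg)
      (Ideal.mul_mem_left _ _ (Ideal.mul_mem_mul hf hg)))
      (Ideal.mul_mem_left _ _ (Ideal.mul_mem_mul hf hf))
  have h3 : ((Ideal.span {X ^ 2 - C p, X ^ 3} : Ideal R[X]) ^ 2).comap (C : R →+* R[X]) ≠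
        ((Ideal.span {X ^ 2 - C p, X ^ 3} : Ideal R[X]).comap (C : R →+* R[X])) ^ 2 := by
    intro h
    rw [h, h1, Ideal.span_singleton_pow, Ideal.mem_span_singleton, ← pow_mul,
      pow_dvd_pow_iff hp.ne_zero hp.not_unit] at h2
    omega
  exact ⟨h1, h2, fun h => h3 (h 2 (by norm_num)), h3⟩
end
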